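/- For every integer n ≥ 2 and all fundamental objects X, Y of the algebra C₃, one has tr(R_X) · tr(R_Y) = 2 · tr(R_X ∘ R_Y). (That is, the (1,1)-invariant of C₃ equals 2.) -/

import Mathlib

open Function Submodule

/-! Common framework: `V = ℂ^{n+1}`, `n`-ary multiplications as functions
`(Fin n → V) → V`, the action of `GL(V)` on them, orbits, and the
(n+1)-dimensional n-ary Filippov algebras of Kaygorodov–Volkov, each described
as an alternating `n`-linear map by its values on the increasing tuples of
distinct standard basis vectors (0-indexed: `bt n j` is the tuple omitting `e j`). -/

/-- The underlying space `V = ℂ^{n+1}`. -/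
abbrev nV (n : ℕ) : Type := Fin (n + 1) → ℂ

/-- The `j`-th standard basis vector of `V` (0-indexed). -/
def sb (n : ℕ) (j : Fin (n + 1)) : nV n := Pi.single j 1

/-- The increasing `n`-tuple of standard basis vectors omitting `e j`. -/
def bt (n : ℕ) (j : Fin (n + 1)) : Fin n → nV n := fun k => sb n (j.succAbove k)

/-- The action of `GL(V)` (invertible linear maps) on `n`-ary multiplications:
`(g • μ)(x₁, …, xₙ) = g (μ (g⁻¹ x₁, …, g⁻¹ xₙ))`. -/
noncomputable def glAct (n : ℕ) (g : nV n ≃ₗ[ℂ] nV n) (μ : (Fin n → nV n) → nV n) :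
    (Fin n → nV n) → nV n :=
  fun x => g (μ fun i => g.symm (x i))

/-- The `GL(V)`-orbit of an `n`-ary multiplication. -/
def glOrbit (n : ℕ) (μ : (Fin n → nV n) → nV n) : Set ((Fin n → nV n) → nV n) :=
  {ν | ∃ g : nV n ≃ₗ[ℂ] nV n, ν = glAct n g μ}

/-- The algebra `B`: `[e₂, …, e_{n+1}] = e₁` (0-indexed: the tuple omitting `e 0`
maps to `e 0`), all other increasing basis products zero. -/
def IsB (n : ℕ) (μ : AlternatingMap ℂ (nV n) (nV n) (Fin n)) : Prop :=
  μ (bt n 0) = sb n 0 ∧ ∀ j : Fin (n + 1), j ≠ 0 → μ (bt n j) = 0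

/-- The algebra `C₁`: `[e₂, …, e_{n+1}] = e₁`, `[e₁, e₃, …, e_{n+1}] = e₂`. -/
def IsC1 (n : ℕ) (μ : AlternatingMap ℂ (nV n) (nV n) (Fin n)) : Prop :=
  μ (bt n 0) = sb n 0 ∧ μ (bt n 1) = sb n 1 ∧
    ∀ j : Fin (n + 1), j ≠ 0 → j ≠ 1 → μ (bt n j) = 0

/-- The algebra `C₂(α)`: `[e₂, …, e_{n+1}] = α e₁ + e₂`, `[e₁, e₃, …, e_{n+1}] = e₂`. -/
def IsC2 (n : ℕ) (α : ℂ) (μ : AlternatingMap ℂ (nV n) (nV n) (Fin n)) : Prop :=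
  μ (bt n 0) = α • sb n 0 + sb n 1 ∧ μ (bt n 1) = sb n 1 ∧
    ∀ j : Fin (n + 1), j ≠ 0 → j ≠ 1 → μ (bt n j) = 0

/-- The algebra `C₃`: `[e₁, e₃, …, e_{n+1}] = e₁`, `[e₂, e₃, …, e_{n+1}] = e₂`. -/
def IsC3 (n : ℕ) (μ : AlternatingMap ℂ (nV n) (nV n) (Fin n)) : Prop :=
  μ (bt n 1) = sb n 0 ∧ μ (bt n 0) = sb n 1 ∧
    ∀ j : Fin (n + 1), j ≠ 0 → j ≠ 1 → μ (bt n j) = 0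

/-- The algebra `D_r`: `[e₁, …, e_{i-1}, e_{i+1}, …, e_{n+1}] = e_i` for `1 ≤ i ≤ r`
(0-indexed: the tuple omitting `e j` maps to `e j` for `j < r` and to `0` otherwise). -/
def IsD (n r : ℕ) (μ : AlternatingMap ℂ (nV n) (nV n) (Fin n)) : Prop :=
  ∀ j : Fin (n + 1), ((j : ℕ) < r → μ (bt n j) = sb n j) ∧ (r ≤ (j : ℕ) → μ (bt n j) = 0)

/-- Two alternating `n`-linear maps on `ℂ^{n+1}` agreeing on the increasing tuples of
distinct standard basis vectors are equal. -/
theorem alternatingMap_ext_bt {n : ℕ} {W : Type*} [AddCommGroup W] [Module ℂ W]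
    {f g : AlternatingMap ℂ (nV n) W (Fin n)} (h : ∀ j, f (bt n j) = g (bt n j)) : f = g := by
  refine Module.Basis.ext_alternating (Pi.basisFun ℂ (Fin (n + 1))) fun v hv => ?_
  have hns : ¬ Surjective v := fun hs => by
    have := Fintype.card_le_of_surjective v hs
    simp at this
  obtain ⟨j, hj⟩ := not_forall.1 hns
  have hne : ∀ i, ∃ k, j.succAbove k = v i := fun i =>
    Fin.exists_succAbove_eq fun hi => hj ⟨i, hi⟩
  choose σ hσ using hne
  have hσi : Injective σ := fun a b hab => hv (by rw [← hσ a, ← hσ b, hab])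
  let τ : Equiv.Perm (Fin n) := Equiv.ofBijective σ (Finite.injective_iff_bijective.1 hσi)
  have hb : (fun i => Pi.basisFun ℂ (Fin (n + 1)) (v i)) = bt n j ∘ τ := by
    funext i
    simp [bt, sb, τ, hσ]
  rw [hb, AlternatingMap.map_perm, AlternatingMap.map_perm, h]

/-- The maximal minor of an `n`-tuple of vectors of `ℂ^{n+1}` omitting the coordinate `j`. -/
noncomputable def minorAlt (n : ℕ) (j : Fin (n + 1)) : AlternatingMap ℂ (nV n) ℂ (Fin n) :=
  Matrix.detRowAlternating.compLinearMap (LinearMap.funLeft ℂ ℂ j.succAbove)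

theorem minorAlt_apply (n : ℕ) (j : Fin (n + 1)) (x : Fin n → nV n) :
    minorAlt n j x = (Matrix.of fun i k => x i (j.succAbove k)).det := rfl

theorem minorAlt_bt_self (n : ℕ) (j : Fin (n + 1)) : minorAlt n j (bt n j) = 1 := by
  rw [minorAlt_apply, ← Matrix.det_one (n := Fin n)]
  congr 1
  ext i k
  simp [bt, sb, Pi.single_apply, Matrix.one_apply, eq_comm]

theorem minorAlt_bt_of_ne (n : ℕ) {j k : Fin (n + 1)} (h : j ≠ k) :
    minorAlt n j (bt n k) = 0 := by
  obtain ⟨i, hi⟩ := Fin.exists_succAbove_eq h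
  rw [minorAlt_apply]
  refine Matrix.det_eq_zero_of_row_eq_zero i fun l => ?_
  simp [bt, sb, hi, Fin.succAbove_ne]

theorem minorAlt_cons_sb_self (m : ℕ) (j : Fin (m + 2)) (X : Fin m → nV (m + 1)) :
    minorAlt (m + 1) j (Fin.cons (sb (m + 1) j) X) = 0 := by
  rw [minorAlt_apply]
  refine Matrix.det_eq_zero_of_row_eq_zero 0 fun l => ?_
  simp [sb, Fin.succAbove_ne]

theorem minorAlt_cons_sb (m : ℕ) (j : Fin (m + 2)) (X : Fin m → nV (m + 1)) :
    minorAlt (m + 1) j (Fin.cons (sb (m + 1) (j.succAbove 0)) X) =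
      (Matrix.of fun i k => X i (j.succAbove k.succ)).det := by
  rw [minorAlt_apply, Matrix.det_succ_row_zero, Fin.sum_univ_succ, Finset.sum_eq_zero]
  · simp [sb, Matrix.submatrix, Matrix.of_apply]
  · intro i _
    simp [sb]

theorem IsC3.apply_eq {n : ℕ} {μ : AlternatingMap ℂ (nV (n + 1)) (nV (n + 1)) (Fin (n + 1))}
    (hμ : IsC3 (n + 1) μ) (x : Fin (n + 1) → nV (n + 1)) :
    μ x = minorAlt (n + 1) 1 x • sb (n + 1) 0 + minorAlt (n + 1) 0 x • sb (n + 1) 1 := by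
  have key : μ = (LinearMap.toSpanSingleton ℂ _ (sb (n + 1) 0)).compAlternatingMap
        (minorAlt (n + 1) 1) +
      (LinearMap.toSpanSingleton ℂ _ (sb (n + 1) 1)).compAlternatingMap
        (minorAlt (n + 1) 0) := by
    refine alternatingMap_ext_bt fun j => ?_
    obtain ⟨h1, h0, hj⟩ := hμ
    by_cases hj0 : j = 0
    · subst hj0
      simp [h0, minorAlt_bt_self, minorAlt_bt_of_ne]
    by_cases hj1 : j = 1
    · subst hj1
      simp [h1, minorAlt_bt_self, minorAlt_bt_of_ne]
    simp [hj j hj0 hj1, minorAlt_bt_of_ne _ (Ne.symm hj0), minorAlt_bt_of_ne _ (Ne.symm hj1)]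
  conv_lhs => rw [key]
  simp

/-- An operator with image in the span of the first two basis vectors, acting on that span
as the scalar `d`, has trace `2 * d`. -/
theorem trace_eq_two_mul {m : ℕ} {R : nV (m + 1) →ₗ[ℂ] nV (m + 1)} {d : ℂ}
    (h0 : R (sb (m + 1) 0) = d • sb (m + 1) 0) (h1 : R (sb (m + 1) 1) = d • sb (m + 1) 1)
    (h : ∀ z (k : Fin m), R z k.succ.succ = 0) :
    LinearMap.trace ℂ (nV (m + 1)) R = 2 * d := by
  rw [LinearMap.trace_eq_matrix_trace ℂ (Pi.basisFun ℂ (Fin (m + 1 + 1))), Matrix.trace,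
    Fin.sum_univ_succ, Fin.sum_univ_succ]
  have e0 := congrFun h0 0
  have e1 := congrFun h1 1
  simp only [sb] at e0 e1
  simp [h, e0, e1]
  ring

/-- A right multiplication operator of `C₃` acts as a scalar on the span of the first two
basis vectors, which contains its image. -/
theorem IsC3.exists_scalar {m : ℕ}
    {μ : AlternatingMap ℂ (nV (m + 1)) (nV (m + 1)) (Fin (m + 1))} (hμ : IsC3 (m + 1) μ)
    {X : Fin m → nV (m + 1)} {R : nV (m + 1) →ₗ[ℂ] nV (m + 1)}
    (hR : ∀ z : nV (m + 1), R z = μ (Fin.cons z X)) :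
    ∃ d : ℂ, R (sb (m + 1) 0) = d • sb (m + 1) 0 ∧ R (sb (m + 1) 1) = d • sb (m + 1) 1 ∧
      ∀ z (k : Fin m), R z k.succ.succ = 0 := by
  refine ⟨(Matrix.of fun i k => X i (Fin.succ (Fin.succ k))).det, ?_, ?_, fun z k => ?_⟩
  · have h := minorAlt_cons_sb m 1 X
    rw [Fin.one_succAbove_zero] at h
    rw [hR, hμ.apply_eq, minorAlt_cons_sb_self, h]
    simp
  · have h := minorAlt_cons_sb m 0 X
    rw [Fin.succAbove_zero, Fin.succ_zero_eq_one] at h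
    rw [hR, hμ.apply_eq, minorAlt_cons_sb_self, h]
    simp
  · rw [hR, hμ.apply_eq]
    have : k.succ.succ ≠ 1 := fun h => Fin.succ_ne_zero k (Fin.succ_injective _ h)
    simp [sb, this]

/-- For every integer `n = m + 1 ≥ 2` and all fundamental objects `X, Y` of
`C₃`, one has `tr(R_X) · tr(R_Y) = 2 · tr(R_X ∘ R_Y)`, i.e. the `(1,1)`-invariant of `C₃`
equals `2`. -/
theorem C3_trace_invariant (m : ℕ) (hm : 1 ≤ m)
    (μ : AlternatingMap ℂ (nV (m + 1)) (nV (m + 1)) (Fin (m + 1))) (hμ : IsC3 (m + 1) μ)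
    (X Y : Fin m → nV (m + 1)) (RX RY : nV (m + 1) →ₗ[ℂ] nV (m + 1))
    (hRX : ∀ z : nV (m + 1), RX z = μ (Fin.cons z X))
    (hRY : ∀ z : nV (m + 1), RY z = μ (Fin.cons z Y)) :
    LinearMap.trace ℂ (nV (m + 1)) RX * LinearMap.trace ℂ (nV (m + 1)) RY =
      2 * LinearMap.trace ℂ (nV (m + 1)) (RX ∘ₗ RY) := by
  obtain ⟨a, a0, a1, ha⟩ := hμ.exists_scalar hRX
  obtain ⟨b, b0, b1, hb⟩ := hμ.exists_scalar hRY
  have hab : LinearMap.trace ℂ (nV (m + 1)) (RX ∘ₗ RY) = 2 * (b * a) :=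
    trace_eq_two_mul (by simp [b0, a0, smul_smul]) (by simp [b1, a1, smul_smul])
      fun z k => ha (RY z) k
  rw [trace_eq_two_mul a0 a1 ha, trace_eq_two_mul b0 b1 hb, hab]
  ring
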